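/- arXiv:2101.02036 — 2 statements merged into one kernel-verified Lean document; each statement's English description precedes it below -/
import Mathlib

section
/- Let a > 4 be a real number and let f_a : ℝ → ℝ be the quadratic (logistic) map f_a(x) = a·x·(1−x). Assume that |f_a'(x)| > 1 for every x ∈ [0,1] with f_a(x) ≤ 1. Then the set Λ = {x ∈ [0,1] : for all n ∈ ℕ, f_a^[n](x) ∈ [0,1]} is a Cantor set: it is closed, totally disconnected, and perfect (has no isolated points). -/
/-- The quadratic (logistic) map. -/
def logisticMap (a : ℝ) : ℝ → ℝ := fun x => a * x * (1 - x)

/-!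
For `a = 4` the coordinate `θ = arcsin √x` conjugates the logistic map to a tent map of slope `2`.
Moreover `logisticMap a = (a / 4) * logisticMap 4`, and multiplication by a constant `c ≥ 1` does
not decrease distances in the coordinate `θ`, because `arcsin (k * t) - arcsin t` is increasing in
`t` for `k ≥ 1`. Hence for every `a ≥ 4` the logistic map doubles `θ`-distances on each of its two
monotone branches, as long as the images stay in `[0, 1]`.

If `a > 4`, the turning point `1 / 2` leaves `[0, 1]` at once, so a connected subset of the
invariant set `Λ` has all its iterates inside a single branch. Its `θ`-diameter then doubles
forever while staying bounded, so it is a point. Conversely, each branch covers `[0, 1]`, so any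
point of `Λ` other than the `n`-th image of `p` can be pulled back along the branches visited by
`p`, which yields points of `Λ` other than `p` that tend to `p`.
-/

open Set

section SurvivorSet

/-- The points whose whole forward orbit under `f` stays in `s`, that is, the largest subset of `s`
mapped into itself by `f`. -/
def survivorSet {X : Type*} (f : X → X) (s : Set X) : Set X :=
  ⋂ n : ℕ, f^[n] ⁻¹' s

variable {X : Type*} {f : X → X} {s : Set X} {x : X}

lemma mem_survivorSet : x ∈ survivorSet f s ↔ ∀ n : ℕ, f^[n] x ∈ s :=
  mem_iInter

lemma survivorSet_subset : survivorSet f s ⊆ s :=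
  fun _ hx => mem_survivorSet.1 hx 0

lemma mapsTo_survivorSet : MapsTo f (survivorSet f s) (survivorSet f s) :=
  fun _ hx => mem_survivorSet.2 fun n => mem_survivorSet.1 hx (n + 1)

lemma mem_survivorSet_of_map_mem (hx : x ∈ s) (hfx : f x ∈ survivorSet f s) :
    x ∈ survivorSet f s :=
  mem_survivorSet.2 fun
    | 0 => hx
    | n + 1 => mem_survivorSet.1 hfx n

lemma isClosed_survivorSet [TopologicalSpace X] (hf : Continuous f) (hs : IsClosed s) :
    IsClosed (survivorSet f s) :=
  isClosed_iInter fun n => hs.preimage (hf.iterate n)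

end SurvivorSet

section Expanding

variable {X Y : Type*} {f : X → X} {g : X → Y} {Λ : Set X} {K : ℝ}

lemma nonpos_of_mul_le_succ_of_le {u : ℕ → ℝ} {C : ℝ} (hK : 1 < K)
    (hgrow : ∀ n, K * u n ≤ u (n + 1)) (hbound : ∀ n, u n ≤ C) : u 0 ≤ 0 := by
  by_contra! hpos
  obtain ⟨n, hn⟩ := pow_unbounded_of_one_lt (C / u 0) hK
  have hgeom : K ^ n * u 0 ≤ u n := geom_le (by positivity) n fun k _ => hgrow k
  rw [div_lt_iff₀ hpos] at hn
  linarith [hbound n]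

theorem isTotallyDisconnected_of_expanding [TopologicalSpace X] [MetricSpace Y] (hK : 1 < K)
    (hf : ContinuousOn f Λ) (hmaps : MapsTo f Λ Λ) (hinj : InjOn g Λ)
    (hbdd : Bornology.IsBounded (g '' Λ))
    (hexp : ∀ t ⊆ Λ, IsPreconnected t → ∀ x ∈ t, ∀ y ∈ t,
      K * dist (g x) (g y) ≤ dist (g (f x)) (g (f y))) :
    IsTotallyDisconnected Λ := by
  intro t htΛ ht x hx y hy
  have himage : ∀ n : ℕ, f^[n] '' t ⊆ Λ ∧ IsPreconnected (f^[n] '' t) := by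
    intro n
    induction n with
    | zero => simpa using ⟨htΛ, ht⟩
    | succ n ih =>
      rw [Function.iterate_succ', image_comp]
      exact ⟨(image_mono ih.1).trans hmaps.image_subset, ih.2.image f (hf.mono ih.1)⟩
  have hmem : ∀ n : ℕ, ∀ z ∈ t, f^[n] z ∈ f^[n] '' t := fun n _ hz => mem_image_of_mem _ hz
  obtain ⟨C, hC⟩ := Metric.isBounded_image_iff.1 hbdd
  have hdist : dist (g x) (g y) ≤ 0 :=
    nonpos_of_mul_le_succ_of_le (u := fun n => dist (g (f^[n] x)) (g (f^[n] y))) hK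
      (fun n => by
        simpa only [Function.iterate_succ_apply'] using
          hexp _ (himage n).1 (himage n).2 _ (hmem n x hx) _ (hmem n y hy))
      (fun n => hC _ ((himage n).1 (hmem n x hx)) _ ((himage n).1 (hmem n y hy)))
  exact hinj (htΛ hx) (htΛ hy) (dist_le_zero.1 hdist)

lemma exists_ne_pow_mul_dist_le [PseudoMetricSpace Y] {C : ℝ} (hK : 0 ≤ K) (hmaps : MapsTo f Λ Λ)
    (hnontriv : Λ.Nontrivial) (hbound : ∀ x ∈ Λ, ∀ y ∈ Λ, dist (g x) (g y) ≤ C)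
    (hlift : ∀ p ∈ Λ, ∀ z ∈ Λ, ∃ q ∈ Λ, f q = z ∧ K * dist (g q) (g p) ≤ dist (g z) (g (f p)))
    (n : ℕ) {p : X} (hp : p ∈ Λ) :
    ∃ q ∈ Λ, q ≠ p ∧ K ^ n * dist (g q) (g p) ≤ C := by
  induction n generalizing p with
  | zero =>
    obtain ⟨q, hq, hqp⟩ := hnontriv.exists_ne p
    exact ⟨q, hq, hqp, by simpa using hbound q hq p hp⟩
  | succ n ih =>
    obtain ⟨z, hz, hzp, hzC⟩ := ih (hmaps hp)
    obtain ⟨q, hq, rfl, hqp⟩ := hlift p hp z hz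
    refine ⟨q, hq, fun h => hzp (congrArg f h), ?_⟩
    calc K ^ (n + 1) * dist (g q) (g p) = K ^ n * (K * dist (g q) (g p)) := by ring
      _ ≤ K ^ n * dist (g (f q)) (g (f p)) := by gcongr
      _ ≤ C := hzC

theorem preperfect_of_contracting_lifts [PseudoMetricSpace X] [PseudoMetricSpace Y] {c : NNReal}
    (hK : 1 < K) (hmaps : MapsTo f Λ Λ) (hnontriv : Λ.Nontrivial)
    (hg : AntilipschitzWith c (Λ.domRestrict g)) (hbdd : Bornology.IsBounded (g '' Λ))
    (hlift : ∀ p ∈ Λ, ∀ z ∈ Λ, ∃ q ∈ Λ, f q = z ∧ K * dist (g q) (g p) ≤ dist (g z) (g (f p))) :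
    Preperfect Λ := by
  intro p hp
  obtain ⟨C, hC⟩ := Metric.isBounded_image_iff.1 hbdd
  refine accPt_iff_nhds.2 fun U hU => ?_
  obtain ⟨ε, hε, hball⟩ := Metric.mem_nhds_iff.1 hU
  obtain ⟨n, hn⟩ := pow_unbounded_of_one_lt (c * C / ε) hK
  obtain ⟨q, hq, hqp, hqC⟩ :=
    exists_ne_pow_mul_dist_le (by positivity) hmaps hnontriv hC hlift n hp
  have hlt : K ^ n * dist q p < K ^ n * ε := by
    calc K ^ n * dist q p ≤ K ^ n * (c * dist (g q) (g p)) := by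
          gcongr
          exact hg.le_mul_dist ⟨q, hq⟩ ⟨p, hp⟩
      _ = c * (K ^ n * dist (g q) (g p)) := by ring
      _ ≤ c * C := by gcongr
      _ < K ^ n * ε := (div_lt_iff₀ hε).1 hn
  exact ⟨q, ⟨hball (lt_of_mul_lt_mul_left hlt (by positivity)), hq⟩, hqp⟩

end Expanding

section ArcsinSqrt

open Real

lemma monotoneOn_arcsin_mul_sub_arcsin {k : ℝ} (hk : 1 ≤ k) :
    MonotoneOn (fun t => arcsin (k * t) - arcsin t) (Icc (-k⁻¹) k⁻¹) := by
  have hk0 : 0 < k := by positivity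
  have habs : ∀ t ∈ interior (Icc (-k⁻¹) k⁻¹), |t| ≤ |k * t| ∧ |k * t| < 1 := by
    intro t ht
    rw [interior_Icc, mem_Ioo, ← abs_lt, ← one_div, lt_div_iff₀' hk0] at ht
    rw [abs_mul, abs_of_pos hk0]
    exact ⟨le_mul_of_one_le_left (abs_nonneg t) hk, ht⟩
  have hderiv : ∀ t : ℝ, |t| < 1 → HasDerivAt arcsin (1 / √(1 - t ^ 2)) t := fun t ht =>
    hasDerivAt_arcsin (abs_lt.1 ht).1.ne' (abs_lt.1 ht).2.ne
  refine monotoneOn_of_hasDerivWithinAt_nonneg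
    (f' := fun t => 1 / √(1 - (k * t) ^ 2) * k - 1 / √(1 - t ^ 2)) (convex_Icc _ _)
    (by fun_prop) (fun t ht => ?_) (fun t ht => ?_) <;> obtain ⟨hle, hlt⟩ := habs t ht
  · exact (((hderiv _ hlt).comp t (hasDerivAt_const_mul k)).sub
      (hderiv t (hle.trans_lt hlt))).hasDerivWithinAt
  · have hpos : 0 < 1 - (k * t) ^ 2 := sub_pos.2 ((sq_lt_one_iff_abs_lt_one _).2 hlt)
    rw [sub_nonneg]
    calc 1 / √(1 - t ^ 2) ≤ 1 / √(1 - (k * t) ^ 2) := by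
          have hsq : t ^ 2 ≤ (k * t) ^ 2 := sq_le_sq.2 hle
          gcongr
      _ ≤ 1 / √(1 - (k * t) ^ 2) * k := le_mul_of_one_le_right (by positivity) hk

/-- The angle `θ ∈ [0, π / 2]` with `sin θ ^ 2 = x`, for `x ∈ [0, 1]`. It serves as an adapted
coordinate, in which the logistic map is uniformly expanding. -/
noncomputable def arcsinSqrt (x : ℝ) : ℝ := arcsin √x

lemma sin_sq_arcsinSqrt {x : ℝ} (hx : x ∈ Icc (0 : ℝ) 1) : sin (arcsinSqrt x) ^ 2 = x := by
  rw [arcsinSqrt, sin_arcsin (by linarith [sqrt_nonneg x]) (sqrt_le_one.2 hx.2), sq_sqrt hx.1]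

lemma antilipschitzWith_domRestrict_arcsinSqrt :
    AntilipschitzWith 1 ((Icc (0 : ℝ) 1).domRestrict arcsinSqrt) := by
  refine AntilipschitzWith.of_le_mul_dist fun ⟨x, hx⟩ ⟨y, hy⟩ => ?_
  have hcos : ∀ z ∈ Icc (0 : ℝ) 1, cos (2 * arcsinSqrt z) = 1 - 2 * z := fun z hz => by
    rw [cos_two_mul, cos_sq', sin_sq_arcsinSqrt hz]
    ring
  have hdist := abs_cos_sub_cos_le (2 * arcsinSqrt x) (2 * arcsinSqrt y)
  rw [hcos x hx, hcos y hy, sub_sub_sub_cancel_left, ← mul_sub, ← mul_sub, abs_mul, abs_mul,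
    abs_two, abs_sub_comm y x] at hdist
  rw [NNReal.coe_one, one_mul]
  exact le_of_mul_le_mul_left hdist two_pos

lemma isBounded_image_arcsinSqrt (s : Set ℝ) : Bornology.IsBounded (arcsinSqrt '' s) :=
  (Metric.isBounded_Icc (-(π / 2)) (π / 2)).subset <|
    image_subset_iff.2 fun _ _ => arcsin_mem_Icc _

lemma dist_arcsinSqrt_le_dist_arcsinSqrt_mul {c x y : ℝ} (hc : 1 ≤ c) (hx : c * x ≤ 1)
    (hy : c * y ≤ 1) :
    dist (arcsinSqrt x) (arcsinSqrt y) ≤ dist (arcsinSqrt (c * x)) (arcsinSqrt (c * y)) := by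
  wlog hxy : x ≤ y generalizing x y
  · simpa only [dist_comm] using this hy hx (le_of_not_ge hxy)
  have hc0 : 0 < c := by positivity
  have hmem : ∀ z, c * z ≤ 1 → √z ∈ Icc (-(√c)⁻¹) (√c)⁻¹ := fun z hz => by
    refine ⟨(neg_nonpos.2 (by positivity)).trans (sqrt_nonneg z), ?_⟩
    rw [← sqrt_inv]
    exact sqrt_le_sqrt (by rwa [← one_div, le_div_iff₀' hc0])
  have hmono : arcsinSqrt (c * x) - arcsinSqrt x ≤ arcsinSqrt (c * y) - arcsinSqrt y := by
    simpa only [arcsinSqrt, sqrt_mul hc0.le] using monotoneOn_arcsin_mul_sub_arcsin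
      (one_le_sqrt.2 hc) (hmem x hx) (hmem y hy) (sqrt_le_sqrt hxy)
  have hle : arcsinSqrt x ≤ arcsinSqrt y := monotone_arcsin (sqrt_le_sqrt hxy)
  rw [dist_comm, dist_comm (arcsinSqrt (c * x)), Real.dist_eq, Real.dist_eq,
    abs_of_nonneg (sub_nonneg.2 hle)]
  linarith [le_abs_self (arcsinSqrt (c * y) - arcsinSqrt (c * x))]

lemma arcsinSqrt_one_sub {x : ℝ} (hx : 0 ≤ x) : arcsinSqrt (1 - x) = π / 2 - arcsinSqrt x := by
  rw [arcsinSqrt, arcsinSqrt, ← arccos_eq_pi_div_two_sub_arcsin, arccos_eq_arcsin (sqrt_nonneg x),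
    sq_sqrt hx]

end ArcsinSqrt

section Logistic

open Real

lemma continuous_logisticMap (a : ℝ) : Continuous (logisticMap a) := by
  unfold logisticMap
  fun_prop

lemma logisticMap_one_sub (a x : ℝ) : logisticMap a (1 - x) = logisticMap a x := by
  simp only [logisticMap]
  ring

lemma logisticMap_eq_div_four_mul (a x : ℝ) : logisticMap a x = a / 4 * logisticMap 4 x := by
  simp only [logisticMap]
  ring

lemma arcsinSqrt_logisticMap_four_of_le_half {x : ℝ} (hx : x ∈ Icc (0 : ℝ) (1 / 2)) :
    arcsinSqrt (logisticMap 4 x) = 2 * arcsinSqrt x := by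
  have hsin : sin (2 * arcsinSqrt x) = √(logisticMap 4 x) := by
    calc sin (2 * arcsinSqrt x) = 2 * √x * √(1 - x) := by
          rw [sin_two_mul, arcsinSqrt, cos_arcsin, sq_sqrt hx.1,
            sin_arcsin (by linarith [sqrt_nonneg x]) (sqrt_le_one.2 (by linarith [hx.2]))]
      _ = √(2 ^ 2 * x * (1 - x)) := by
          rw [sqrt_mul (by linarith [hx.1]), sqrt_mul (by positivity), sqrt_sq zero_le_two]
      _ = √(logisticMap 4 x) := by norm_num [logisticMap]
  have hnonneg : 0 ≤ arcsinSqrt x := arcsin_nonneg.2 (sqrt_nonneg x)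
  have hle : arcsinSqrt x ≤ π / 4 := by
    refine (arcsin_le_iff_le_sin' ⟨by linarith [pi_pos], by linarith [pi_pos]⟩).2 ?_
    rw [sin_pi_div_four]
    exact sqrt_le_iff.2 ⟨by positivity, by rw [div_pow, sq_sqrt zero_le_two]; linarith [hx.2]⟩
  exact arcsin_eq_of_sin_eq hsin ⟨by linarith [pi_pos], by linarith⟩

lemma arcsinSqrt_logisticMap_four_of_half_le {x : ℝ} (hx : x ∈ Icc (1 / 2 : ℝ) 1) :
    arcsinSqrt (logisticMap 4 x) = π - 2 * arcsinSqrt x := by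
  have hx' : 1 - x ∈ Icc (0 : ℝ) (1 / 2) := ⟨by linarith [hx.2], by linarith [hx.1]⟩
  rw [← logisticMap_one_sub, arcsinSqrt_logisticMap_four_of_le_half hx',
    arcsinSqrt_one_sub (by linarith [hx.1])]
  ring

/-- Two points lie in a common lap (maximal interval of monotonicity) of the logistic maps. The
turning point `1 / 2` belongs to both laps. -/
def SameLap (x y : ℝ) : Prop :=
  x ≤ 1 / 2 ∧ y ≤ 1 / 2 ∨ 1 / 2 ≤ x ∧ 1 / 2 ≤ y

variable {a x y : ℝ}

lemma dist_arcsinSqrt_logisticMap_four (hx : x ∈ Icc (0 : ℝ) 1) (hy : y ∈ Icc (0 : ℝ) 1)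
    (hxy : SameLap x y) :
    dist (arcsinSqrt (logisticMap 4 x)) (arcsinSqrt (logisticMap 4 y)) =
      2 * dist (arcsinSqrt x) (arcsinSqrt y) := by
  rcases hxy with ⟨hx', hy'⟩ | ⟨hx', hy'⟩
  · rw [arcsinSqrt_logisticMap_four_of_le_half ⟨hx.1, hx'⟩,
      arcsinSqrt_logisticMap_four_of_le_half ⟨hy.1, hy'⟩, Real.dist_eq, Real.dist_eq, ← mul_sub,
      abs_mul, abs_two]
  · rw [arcsinSqrt_logisticMap_four_of_half_le ⟨hx', hx.2⟩,
      arcsinSqrt_logisticMap_four_of_half_le ⟨hy', hy.2⟩, dist_sub_left, Real.dist_eq,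
      Real.dist_eq, ← mul_sub, abs_mul, abs_two]

lemma two_mul_dist_arcsinSqrt_le (ha : 4 ≤ a) (hx : x ∈ Icc (0 : ℝ) 1) (hy : y ∈ Icc (0 : ℝ) 1)
    (hfx : logisticMap a x ≤ 1) (hfy : logisticMap a y ≤ 1) (hxy : SameLap x y) :
    2 * dist (arcsinSqrt x) (arcsinSqrt y) ≤
      dist (arcsinSqrt (logisticMap a x)) (arcsinSqrt (logisticMap a y)) := by
  rw [logisticMap_eq_div_four_mul] at hfx hfy
  rw [← dist_arcsinSqrt_logisticMap_four hx hy hxy, logisticMap_eq_div_four_mul a x,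
    logisticMap_eq_div_four_mul a y]
  exact dist_arcsinSqrt_le_dist_arcsinSqrt_mul (by linarith) hfx hfy

lemma exists_sameLap_logisticMap_eq (ha : 4 ≤ a) {z : ℝ} (hz : z ∈ Icc (0 : ℝ) 1) (p : ℝ) :
    ∃ q ∈ Icc (0 : ℝ) 1, logisticMap a q = z ∧ SameLap q p := by
  have hleft : ∃ q ∈ Icc (0 : ℝ) (1 / 2), logisticMap a q = z := by
    refine intermediate_value_Icc (by norm_num) (continuous_logisticMap a).continuousOn ?_
    simp only [logisticMap]
    exact ⟨by linarith [hz.1], by linarith [hz.2]⟩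
  obtain ⟨q, hq, hqz⟩ := hleft
  rcases le_total p (1 / 2) with hp | hp
  · exact ⟨q, ⟨hq.1, by linarith [hq.2]⟩, hqz, .inl ⟨hq.2, hp⟩⟩
  · exact ⟨1 - q, ⟨by linarith [hq.2], by linarith [hq.1]⟩, by rw [logisticMap_one_sub, hqz],
      .inr ⟨by linarith [hq.2], hp⟩⟩

lemma sameLap_of_isPreconnected {t : Set ℝ} (ht : IsPreconnected t) (hhalf : 1 / 2 ∉ t)
    (hx : x ∈ t) (hy : y ∈ t) : SameLap x y := by
  rcases le_total x (1 / 2) with hx' | hx' <;> rcases le_total y (1 / 2) with hy' | hy'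
  · exact .inl ⟨hx', hy'⟩
  · exact absurd (ht.Icc_subset hx hy ⟨hx', hy'⟩) hhalf
  · exact absurd (ht.Icc_subset hy hx ⟨hy', hx'⟩) hhalf
  · exact .inr ⟨hx', hy'⟩

lemma half_notMem_survivorSet_logisticMap (ha : 4 < a) :
    1 / 2 ∉ survivorSet (logisticMap a) (Icc 0 1) := by
  intro h
  have hle := (survivorSet_subset (mapsTo_survivorSet h)).2
  simp only [logisticMap] at hle
  linarith

lemma nontrivial_survivorSet_logisticMap (a : ℝ) :
    (survivorSet (logisticMap a) (Icc 0 1)).Nontrivial := by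
  have hzero : (0 : ℝ) ∈ survivorSet (logisticMap a) (Icc 0 1) :=
    mem_survivorSet.2 fun n => by
      rw [Function.iterate_fixed (by simp [logisticMap])]
      exact left_mem_Icc.2 zero_le_one
  have hone : (1 : ℝ) ∈ survivorSet (logisticMap a) (Icc 0 1) :=
    mem_survivorSet_of_map_mem (right_mem_Icc.2 zero_le_one) (by simpa [logisticMap] using hzero)
  exact ⟨0, hzero, 1, hone, zero_ne_one⟩

lemma two_mul_dist_arcsinSqrt_le_of_mem_survivorSet (ha : 4 ≤ a)
    (hx : x ∈ survivorSet (logisticMap a) (Icc 0 1))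
    (hy : y ∈ survivorSet (logisticMap a) (Icc 0 1)) (hxy : SameLap x y) :
    2 * dist (arcsinSqrt x) (arcsinSqrt y) ≤
      dist (arcsinSqrt (logisticMap a x)) (arcsinSqrt (logisticMap a y)) :=
  two_mul_dist_arcsinSqrt_le ha (survivorSet_subset hx) (survivorSet_subset hy)
    (survivorSet_subset (mapsTo_survivorSet hx)).2 (survivorSet_subset (mapsTo_survivorSet hy)).2
    hxy

theorem isTotallyDisconnected_survivorSet_logisticMap (ha : 4 < a) :
    IsTotallyDisconnected (survivorSet (logisticMap a) (Icc 0 1)) :=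
  isTotallyDisconnected_of_expanding one_lt_two (continuous_logisticMap a).continuousOn
    mapsTo_survivorSet
    ((injOn_iff_injective.2 antilipschitzWith_domRestrict_arcsinSqrt.injective).mono
      survivorSet_subset)
    (isBounded_image_arcsinSqrt _) fun _ htΛ ht _ hx _ hy =>
      two_mul_dist_arcsinSqrt_le_of_mem_survivorSet ha.le (htΛ hx) (htΛ hy) <|
        sameLap_of_isPreconnected ht (fun h => half_notMem_survivorSet_logisticMap ha (htΛ h)) hx hy

theorem preperfect_survivorSet_logisticMap (ha : 4 ≤ a) :
    Preperfect (survivorSet (logisticMap a) (Icc 0 1)) := by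
  refine preperfect_of_contracting_lifts one_lt_two mapsTo_survivorSet
    (nontrivial_survivorSet_logisticMap a)
    (fun x y => antilipschitzWith_domRestrict_arcsinSqrt ⟨x, survivorSet_subset x.2⟩
      ⟨y, survivorSet_subset y.2⟩)
    (isBounded_image_arcsinSqrt _) fun p hp z hz => ?_
  obtain ⟨q, hq, rfl, hqp⟩ := exists_sameLap_logisticMap_eq ha (survivorSet_subset hz) p
  have hqΛ := mem_survivorSet_of_map_mem hq hz
  exact ⟨q, hqΛ, rfl, two_mul_dist_arcsinSqrt_le_of_mem_survivorSet ha hqΛ hp hqp⟩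

end Logistic

theorem logistic_invariant_set_is_cantor_general (a : ℝ) (ha : 4 < a) :
    IsClosed {x : ℝ | x ∈ Set.Icc (0 : ℝ) 1 ∧ ∀ n : ℕ,
        (logisticMap a)^[n] x ∈ Set.Icc (0 : ℝ) 1} ∧
    (∀ x y : ℝ, x < y → ¬ Set.Icc x y ⊆ {x : ℝ | x ∈ Set.Icc (0 : ℝ) 1 ∧ ∀ n : ℕ,
        (logisticMap a)^[n] x ∈ Set.Icc (0 : ℝ) 1}) ∧
    (∀ p ∈ {x : ℝ | x ∈ Set.Icc (0 : ℝ) 1 ∧ ∀ n : ℕ,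
        (logisticMap a)^[n] x ∈ Set.Icc (0 : ℝ) 1},
      AccPt p (Filter.principal {x : ℝ | x ∈ Set.Icc (0 : ℝ) 1 ∧ ∀ n : ℕ,
        (logisticMap a)^[n] x ∈ Set.Icc (0 : ℝ) 1})) := by
  have hΛ : {x : ℝ | x ∈ Icc (0 : ℝ) 1 ∧ ∀ n : ℕ, (logisticMap a)^[n] x ∈ Icc (0 : ℝ) 1} =
      survivorSet (logisticMap a) (Icc 0 1) :=
    ext fun _ => ⟨fun hx => mem_survivorSet.2 hx.2,
      fun hx => ⟨survivorSet_subset hx, mem_survivorSet.1 hx⟩⟩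
  rw [hΛ]
  refine ⟨isClosed_survivorSet (continuous_logisticMap a) isClosed_Icc, fun x y hxy hsub => ?_,
    preperfect_survivorSet_logisticMap ha.le⟩
  exact hxy.ne <| isTotallyDisconnected_survivorSet_logisticMap ha _ hsub isPreconnected_Icc
    (left_mem_Icc.2 hxy.le) (right_mem_Icc.2 hxy.le)

/-- For `a > 4`, if `|f_a'(x)| > 1` for every `x ∈ [0,1]` with `f_a x ≤ 1`, then the set
`Λ = {x ∈ [0,1] : ∀ n, f_a^[n] x ∈ [0,1]}` is a Cantor set: closed, totally disconnected
(contains no nondegenerate interval), and perfect (no isolated points). -/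
theorem logistic_invariant_set_is_cantor (a : ℝ) (ha : 4 < a)
    (hderiv : ∀ x ∈ Set.Icc (0 : ℝ) 1, logisticMap a x ≤ 1 → 1 < |deriv (logisticMap a) x|) :
    IsClosed {x : ℝ | x ∈ Set.Icc (0 : ℝ) 1 ∧ ∀ n : ℕ,
        (logisticMap a)^[n] x ∈ Set.Icc (0 : ℝ) 1} ∧
    (∀ x y : ℝ, x < y → ¬ Set.Icc x y ⊆ {x : ℝ | x ∈ Set.Icc (0 : ℝ) 1 ∧ ∀ n : ℕ,
        (logisticMap a)^[n] x ∈ Set.Icc (0 : ℝ) 1}) ∧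
    (∀ p ∈ {x : ℝ | x ∈ Set.Icc (0 : ℝ) 1 ∧ ∀ n : ℕ,
        (logisticMap a)^[n] x ∈ Set.Icc (0 : ℝ) 1},
      AccPt p (Filter.principal {x : ℝ | x ∈ Set.Icc (0 : ℝ) 1 ∧ ∀ n : ℕ,
        (logisticMap a)^[n] x ∈ Set.Icc (0 : ℝ) 1})) :=
  logistic_invariant_set_is_cantor_general a ha
end

section
/- Let a > 4 and f_a(x) = a·x·(1−x). If x ∈ ℝ satisfies f_a(x) > 1, then the sequence of iterates f_a^[n](x) tends to −∞ as n → ∞. -/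
/-!
For `a ≥ 0` the logistic map `a * y * (1 - y) = a * y - a * y ^ 2` lies below the linear map
`y ↦ a * y`. The latter is monotone, so the comparison passes to iterates, and for `a > 1` a
negative point `y` is driven to `-∞` at least as fast as `a ^ n * y`. If the image of `x` exceeds
`1`, then the second iterate of `x` is negative.
-/

open Filter

theorem iterate_le_pow_mul_of_le_mul {M : Type*} [MonoidWithZero M] [Preorder M] [PosMulMono M]
    {f : M → M} {a : M} (ha : 0 ≤ a) (hf : ∀ y, f y ≤ a * y) (n : ℕ) (y : M) :
    f^[n] y ≤ a ^ n * y := by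
  simpa only [mul_left_iterate] using
    (monotone_mul_left_of_nonneg ha).le_iterate_of_le hf n y

theorem tendsto_iterate_atBot_of_le_mul_of_neg {R : Type*} [Ring R] [LinearOrder R]
    [IsStrictOrderedRing R] [Archimedean R] {f : R → R} {a y : R} (ha : 1 < a)
    (hf : ∀ z, f z ≤ a * z) (hy : y < 0) :
    Tendsto (fun n : ℕ => f^[n] y) atTop atBot :=
  tendsto_atBot_mono (fun n => iterate_le_pow_mul_of_le_mul (zero_le_one.trans ha.le) hf n y)
    ((tendsto_pow_atTop_atTop_of_one_lt ha).atTop_mul_const_of_neg' hy)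

theorem logisticMap_le_mul {a : ℝ} (ha : 0 ≤ a) (y : ℝ) : logisticMap a y ≤ a * y :=
  calc
    logisticMap a y = a * y - a * y ^ 2 := by unfold logisticMap; ring
    _ ≤ a * y := sub_le_self _ (by positivity)

theorem logisticMap_neg_of_one_lt {a y : ℝ} (ha : 0 < a) (hy : 1 < y) : logisticMap a y < 0 :=
  mul_neg_of_pos_of_neg (mul_pos ha (zero_lt_one.trans hy)) (sub_neg.2 hy)

/-- For `a > 4`, if `f_a x > 1` then the iterates `f_a^[n] x` tend to `-∞`. -/
theorem logistic_escape_tendsto_atBot (a : ℝ) (ha : 4 < a) (x : ℝ)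
    (hx : 1 < logisticMap a x) :
    Filter.Tendsto (fun n : ℕ => (logisticMap a)^[n] x) Filter.atTop Filter.atBot := by
  have ha₀ : 0 < a := by linarith
  have ha₁ : 1 < a := by linarith
  have second_iterate_neg : (logisticMap a)^[2] x < 0 := logisticMap_neg_of_one_lt ha₀ hx
  rw [← tendsto_add_atTop_iff_nat 2]
  simpa only [Function.iterate_add_apply] using
    tendsto_iterate_atBot_of_le_mul_of_neg ha₁ (logisticMap_le_mul ha₀.le) second_iterate_neg
end
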